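/- Let R be a commutative ring and n ≥ 1. The map * : M_{2^n}(R) → M_{2^n}(R) defined by M* := J_n·Mᵀ·J_nᵀ is an R-linear anti-automorphism of order two (i.e. (MN)* = N*·M* and M** = M), and it satisfies φ(v,w)* = −φ(v,w) for all (v,w) ∈ R^n ⊕ R^n; hence, under the identification φ : Cl ≅ M_{2^n}(R), it is the standard involution of the Clifford algebra, i.e. the unique anti-automorphism of Cl extending the map (v,w) ↦ (−v,−w) on R^n ⊕ R^n. -/

import Mathlib

open Matrix

noncomputable section

/-- Reindexing equivalence `Fin (2 ^ n) ⊕ Fin (2 ^ n) ≃ Fin (2 ^ (n + 1))`. -/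
def pow2Equiv (n : ℕ) : Fin (2 ^ n) ⊕ Fin (2 ^ n) ≃ Fin (2 ^ (n + 1)) :=
  finSumFinEquiv.trans (finCongr (by rw [pow_succ]; ring))

/-- The Suslin matrix `S_n(v, w)` of size `2 ^ n` associated to `v, w : Fin (n+1) → R`. -/
def sus (R : Type) [CommRing R] : (n : ℕ) → (Fin (n + 1) → R) → (Fin (n + 1) → R) →
    Matrix (Fin (2 ^ n)) (Fin (2 ^ n)) R
  | 0, v, _ => v 0 • 1
  | n + 1, v, w =>
      Matrix.reindex (pow2Equiv n) (pow2Equiv n)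
        (Matrix.fromBlocks (v 0 • 1) (sus R n (v ∘ Fin.succ) (w ∘ Fin.succ))
          (-(sus R n (w ∘ Fin.succ) (v ∘ Fin.succ))ᵀ) (w 0 • 1))

/-- The conjugate Suslin matrix `S̄_n(v, w) = S_n(w, v)ᵀ`. -/
def susBar (R : Type) [CommRing R] (n : ℕ) (v w : Fin (n + 1) → R) :
    Matrix (Fin (2 ^ n)) (Fin (2 ^ n)) R :=
  (sus R n w v)ᵀ

/-- Suslin's matrices `J_n`. -/
def Jmat (R : Type) [CommRing R] : (n : ℕ) → Matrix (Fin (2 ^ n)) (Fin (2 ^ n)) R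
  | 0 => 1
  | n + 1 =>
      if Even (n + 1) then
        Matrix.reindex (pow2Equiv n) (pow2Equiv n)
          (Matrix.fromBlocks (Jmat R n) 0 0 (-(Jmat R n)))
      else
        Matrix.reindex (pow2Equiv n) (pow2Equiv n)
          (Matrix.fromBlocks 0 (Jmat R n) (-(Jmat R n)) 0)

/-- The involution `M ↦ M* = J_n · Mᵀ · J_nᵀ`. -/
def invol (R : Type) [CommRing R] (n : ℕ) (M : Matrix (Fin (2 ^ n)) (Fin (2 ^ n)) R) :
    Matrix (Fin (2 ^ n)) (Fin (2 ^ n)) R :=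
  Jmat R n * Mᵀ * (Jmat R n)ᵀ

/-- `φ(v, w) = [[0, S_n(v,w)], [S̄_n(v,w), 0]]` (note the shift: vectors in `R^{n+1}`,
matrices of size `2 ^ (n + 1)`). -/
def phiMat (R : Type) [CommRing R] (n : ℕ) (v w : Fin (n + 1) → R) :
    Matrix (Fin (2 ^ (n + 1))) (Fin (2 ^ (n + 1))) R :=
  Matrix.reindex (pow2Equiv n) (pow2Equiv n)
    (Matrix.fromBlocks 0 (sus R n v w) (susBar R n v w) 0)

/-- The set of Suslin matrices of size `2 ^ m`. -/
def SuslinSet (R : Type) [CommRing R] (m : ℕ) : Set (Matrix (Fin (2 ^ m)) (Fin (2 ^ m)) R) :=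
  {S | ∃ v w : Fin (m + 1) → R, S = sus R m v w}

/-- The image of the hyperbolic space `R^{m+1} ⊕ R^{m+1}` inside the Clifford algebra
`M_{2^{m+1}}(R)`. -/
def PhiSet (R : Type) [CommRing R] (m : ℕ) :
    Set (Matrix (Fin (2 ^ (m + 1))) (Fin (2 ^ (m + 1))) R) :=
  {x | ∃ v w : Fin (m + 1) → R, x = phiMat R m v w}

/-- The block diagonal matrix `diag(g₁, g₂)`. -/
def diagBlock (R : Type) [CommRing R] (m : ℕ)
    (g₁ g₂ : Matrix (Fin (2 ^ m)) (Fin (2 ^ m)) R) :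
    Matrix (Fin (2 ^ (m + 1))) (Fin (2 ^ (m + 1))) R :=
  Matrix.reindex (pow2Equiv m) (pow2Equiv m) (Matrix.fromBlocks g₁ 0 0 g₂)

/-- `Spin_{2(m+1)}(R)`, as the set of pairs `(g₁, g₂)` such that `x = diag(g₁, g₂)`
satisfies `x · x* = 1` and conjugation by `x` maps the image of the hyperbolic space
onto itself. -/
def SpinPair (R : Type) [CommRing R] (m : ℕ) :
    Set (Matrix (Fin (2 ^ m)) (Fin (2 ^ m)) R × Matrix (Fin (2 ^ m)) (Fin (2 ^ m)) R) :=
  {p | IsUnit p.1 ∧ IsUnit p.2 ∧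
    diagBlock R m p.1 p.2 * invol R (m + 1) (diagBlock R m p.1 p.2) = 1 ∧
    (fun y => diagBlock R m p.1 p.2 * y * (diagBlock R m p.1 p.2)⁻¹) '' PhiSet R m
      = PhiSet R m}

/-- The group `G_m(R)` of `g ∈ GL_{2^m}(R)` such that `g · S · g*` is a Suslin matrix
for every Suslin matrix `S`. -/
def GSet (R : Type) [CommRing R] (m : ℕ) : Set (Matrix (Fin (2 ^ m)) (Fin (2 ^ m)) R) :=
  {g | IsUnit g ∧ ∀ S ∈ SuslinSet R m, g * S * invol R m g ∈ SuslinSet R m}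

/-- The group `SG_m(R)` of `g ∈ G_m(R)` preserving the length `l(S(v,w)) = v ⬝ᵥ w`. -/
def SGSet (R : Type) [CommRing R] (m : ℕ) : Set (Matrix (Fin (2 ^ m)) (Fin (2 ^ m)) R) :=
  {g | g ∈ GSet R m ∧ ∀ v w v' w' : Fin (m + 1) → R,
    g * sus R m v w * invol R m g = sus R m v' w' → v' ⬝ᵥ w' = v ⬝ᵥ w}

/-- The hyperbolic quadratic form `q(v, w) = v ⬝ᵥ w` on `R^n ⊕ R^n`. -/
def hypForm (R : Type) [CommRing R] (n : ℕ) :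
    QuadraticForm R ((Fin n → R) × (Fin n → R)) :=
  LinearMap.BilinMap.toQuadraticMap
    (LinearMap.mk₂ R (fun x y => x.1 ⬝ᵥ y.2)
      (fun x x' y => by simp [add_dotProduct])
      (fun c x y => by simp [smul_dotProduct])
      (fun x y y' => by simp [dotProduct_add])
      (fun x c y => by simp [dotProduct_smul]))

/-- `E_i = S_m(e_i, 0)`. -/
def Emat (R : Type) [CommRing R] (m : ℕ) (i : Fin (m + 1)) :
    Matrix (Fin (2 ^ m)) (Fin (2 ^ m)) R :=
  sus R m (Pi.single i 1) 0

/-- `F_i = S_m(0, e_i)`. -/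
def Fmat (R : Type) [CommRing R] (m : ℕ) (i : Fin (m + 1)) :
    Matrix (Fin (2 ^ m)) (Fin (2 ^ m)) R :=
  sus R m 0 (Pi.single i 1)

/-!
Passing from `J_n` to `J_{n+1}` turns `*` into an explicit operation on `2 × 2` block matrices: for
`n` odd it stars the diagonal blocks and exchanges and negates the starred off-diagonal ones; for
`n` even it exchanges the starred diagonal blocks and negates the starred off-diagonal ones. By
induction `1* = 1` (that is, `J_n` is orthogonal, so `*` reverses products) and `M** = M`. The same
recursion shows that on Suslin matrices `*` is the identity for `n` even and the conjugation
`S ↦ S̄` for `n` odd. In either parity the block rule sends `φ(v, w) = [[0, S], [S̄, 0]]` to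
`-φ(v, w)`.
-/

section BlockTranspose

variable {R l m l' m' : Type*} [Fintype m] [Fintype m']

theorem reindex_mul_transpose_mul_transpose [NonUnitalNonAssocSemiring R] (e : l ≃ l') (f : m ≃ m')
    (J : Matrix l m R) (M : Matrix m m R) :
    reindex e f J * (reindex f f M)ᵀ * (reindex e f J)ᵀ = reindex e e (J * Mᵀ * Jᵀ) := by
  simp only [reindex_apply, transpose_submatrix, submatrix_mul_equiv]

variable [NonUnitalNonAssocRing R]

theorem fromBlocks_diag_mul_transpose_mul_transpose (J : Matrix l m R) (A B C D : Matrix m m R) :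
    fromBlocks J 0 0 (-J) * (fromBlocks A B C D)ᵀ * (fromBlocks J 0 0 (-J))ᵀ =
      fromBlocks (J * Aᵀ * Jᵀ) (-(J * Cᵀ * Jᵀ)) (-(J * Bᵀ * Jᵀ)) (J * Dᵀ * Jᵀ) := by
  simp [fromBlocks_transpose, fromBlocks_multiply]

theorem fromBlocks_antidiag_mul_transpose_mul_transpose (J : Matrix l m R)
    (A B C D : Matrix m m R) :
    fromBlocks 0 J (-J) 0 * (fromBlocks A B C D)ᵀ * (fromBlocks 0 J (-J) 0)ᵀ =
      fromBlocks (J * Dᵀ * Jᵀ) (-(J * Bᵀ * Jᵀ)) (-(J * Cᵀ * Jᵀ)) (J * Aᵀ * Jᵀ) := by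
  simp [fromBlocks_transpose, fromBlocks_multiply]

end BlockTranspose

section Involution

variable {R : Type} [CommRing R] {n : ℕ}

theorem invol_add (M N : Matrix (Fin (2 ^ n)) (Fin (2 ^ n)) R) :
    invol R n (M + N) = invol R n M + invol R n N := by
  simp only [invol, transpose_add, mul_add, add_mul]

theorem invol_smul (c : R) (M : Matrix (Fin (2 ^ n)) (Fin (2 ^ n)) R) :
    invol R n (c • M) = c • invol R n M := by
  simp only [invol, transpose_smul, mul_smul_comm, smul_mul_assoc]

theorem invol_neg (M : Matrix (Fin (2 ^ n)) (Fin (2 ^ n)) R) :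
    invol R n (-M) = -invol R n M := by
  simp only [invol, transpose_neg, mul_neg, neg_mul]

theorem invol_zero : invol R n 0 = 0 := by
  simp only [invol, transpose_zero, mul_zero, zero_mul]

theorem invol_transpose (M : Matrix (Fin (2 ^ n)) (Fin (2 ^ n)) R) :
    invol R n Mᵀ = (invol R n M)ᵀ := by
  simp only [invol, transpose_mul, transpose_transpose, mul_assoc]

theorem invol_fromBlocks_of_odd (hn : Odd n) (A B C D : Matrix (Fin (2 ^ n)) (Fin (2 ^ n)) R) :
    invol R (n + 1) (reindex (pow2Equiv n) (pow2Equiv n) (fromBlocks A B C D)) =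
      reindex (pow2Equiv n) (pow2Equiv n)
        (fromBlocks (invol R n A) (-invol R n C) (-invol R n B) (invol R n D)) := by
  rw [invol, Jmat, if_pos hn.add_one, reindex_mul_transpose_mul_transpose,
    fromBlocks_diag_mul_transpose_mul_transpose]
  rfl

theorem invol_fromBlocks_of_even (hn : Even n) (A B C D : Matrix (Fin (2 ^ n)) (Fin (2 ^ n)) R) :
    invol R (n + 1) (reindex (pow2Equiv n) (pow2Equiv n) (fromBlocks A B C D)) =
      reindex (pow2Equiv n) (pow2Equiv n)
        (fromBlocks (invol R n D) (-invol R n B) (-invol R n C) (invol R n A)) := by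
  rw [invol, Jmat, if_neg (Nat.not_even_iff_odd.mpr hn.add_one),
    reindex_mul_transpose_mul_transpose, fromBlocks_antidiag_mul_transpose_mul_transpose]
  rfl

theorem invol_one : invol R n 1 = 1 := by
  induction n with
  | zero => simp [invol, Jmat]
  | succ n ih =>
    have one_eq : (1 : Matrix (Fin (2 ^ (n + 1))) (Fin (2 ^ (n + 1))) R) =
        reindex (pow2Equiv n) (pow2Equiv n) (fromBlocks 1 0 0 1) := by
      rw [fromBlocks_one, reindex_apply, submatrix_one_equiv]
    rcases n.even_or_odd with hn | hn
    · rw [one_eq, invol_fromBlocks_of_even hn, ih, invol_zero, neg_zero]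
    · rw [one_eq, invol_fromBlocks_of_odd hn, ih, invol_zero, neg_zero]

theorem Jmat_mul_transpose : Jmat R n * (Jmat R n)ᵀ = 1 := by
  simpa only [invol, transpose_one, mul_one] using invol_one (R := R) (n := n)

theorem invol_mul (M N : Matrix (Fin (2 ^ n)) (Fin (2 ^ n)) R) :
    invol R n (M * N) = invol R n N * invol R n M := by
  have transpose_mul_Jmat : (Jmat R n)ᵀ * Jmat R n = 1 := mul_eq_one_comm.mp Jmat_mul_transpose
  calc Jmat R n * (M * N)ᵀ * (Jmat R n)ᵀ
      = Jmat R n * Nᵀ * 1 * Mᵀ * (Jmat R n)ᵀ := by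
        rw [transpose_mul, mul_one, ← mul_assoc]
    _ = Jmat R n * Nᵀ * (Jmat R n)ᵀ * (Jmat R n * Mᵀ * (Jmat R n)ᵀ) := by
        simp only [← transpose_mul_Jmat, mul_assoc]

theorem invol_invol (M : Matrix (Fin (2 ^ n)) (Fin (2 ^ n)) R) :
    invol R n (invol R n M) = M := by
  induction n with
  | zero => simp [invol, Jmat]
  | succ n ih =>
    obtain ⟨M, rfl⟩ := (reindex (pow2Equiv n) (pow2Equiv n)).surjective M
    rw [← fromBlocks_toBlocks M]
    rcases n.even_or_odd with hn | hn
    · simp only [invol_fromBlocks_of_even hn, invol_neg, neg_neg, ih]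
    · simp only [invol_fromBlocks_of_odd hn, invol_neg, neg_neg, ih]

end Involution

section Suslin

variable {R : Type} [CommRing R] {n : ℕ}

theorem susBar_succ (v w : Fin (n + 2) → R) :
    susBar R (n + 1) v w = reindex (pow2Equiv n) (pow2Equiv n)
      (fromBlocks (w 0 • 1) (-sus R n (v ∘ Fin.succ) (w ∘ Fin.succ))
        (susBar R n (v ∘ Fin.succ) (w ∘ Fin.succ)) (v 0 • 1)) := by
  simp only [susBar, sus, transpose_reindex, fromBlocks_transpose, transpose_smul, transpose_one,
    transpose_neg, transpose_transpose]

mutual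

theorem invol_sus_of_even : ∀ {n : ℕ}, Even n → ∀ v w : Fin (n + 1) → R,
    invol R n (sus R n v w) = sus R n v w
  | 0, _, v, w => by rw [sus, invol_smul, invol_one]
  | n + 1, hn, v, w => by
    have hn' : Odd n := Nat.not_even_iff_odd.mp (Nat.even_add_one.mp hn)
    simp only [sus, invol_fromBlocks_of_odd hn', invol_smul, invol_one, invol_neg,
      invol_transpose, invol_sus_of_odd hn', susBar, transpose_transpose, neg_neg]

theorem invol_sus_of_odd : ∀ {n : ℕ}, Odd n → ∀ v w : Fin (n + 1) → R,
    invol R n (sus R n v w) = susBar R n v w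
  | 0, hn, _, _ => absurd hn Nat.not_odd_zero
  | n + 1, hn, v, w => by
    have hn' : Even n := Nat.not_odd_iff_even.mp (Nat.odd_add_one.mp hn)
    rw [susBar_succ]
    simp only [sus, invol_fromBlocks_of_even hn', invol_smul, invol_one, invol_neg,
      invol_transpose, invol_sus_of_even hn', susBar, neg_neg]

end

theorem invol_susBar_of_even (hn : Even n) (v w : Fin (n + 1) → R) :
    invol R n (susBar R n v w) = susBar R n v w := by
  rw [susBar, invol_transpose, invol_sus_of_even hn]

theorem invol_susBar_of_odd (hn : Odd n) (v w : Fin (n + 1) → R) :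
    invol R n (susBar R n v w) = sus R n v w := by
  rw [susBar, invol_transpose, invol_sus_of_odd hn, susBar, transpose_transpose]

theorem neg_phiMat (v w : Fin (n + 1) → R) :
    -phiMat R n v w = reindex (pow2Equiv n) (pow2Equiv n)
      (fromBlocks 0 (-sus R n v w) (-susBar R n v w) 0) :=
  calc -phiMat R n v w
      = reindex (pow2Equiv n) (pow2Equiv n) (-fromBlocks 0 (sus R n v w) (susBar R n v w) 0) := rfl
    _ = reindex (pow2Equiv n) (pow2Equiv n)
          (fromBlocks 0 (-sus R n v w) (-susBar R n v w) 0) := by rw [fromBlocks_neg, neg_zero]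

theorem invol_phiMat (v w : Fin (n + 1) → R) :
    invol R (n + 1) (phiMat R n v w) = -phiMat R n v w := by
  rw [neg_phiMat, phiMat]
  rcases n.even_or_odd with hn | hn
  · rw [invol_fromBlocks_of_even hn, invol_zero, invol_sus_of_even hn, invol_susBar_of_even hn]
  · rw [invol_fromBlocks_of_odd hn, invol_zero, invol_sus_of_odd hn, invol_susBar_of_odd hn]

end Suslin

/-- for `n ≥ 1` the map `M ↦ M* = J_n · Mᵀ · J_nᵀ` on `M_{2^n}(R)` is an
`R`-linear anti-automorphism of order two, and `φ(v,w)* = -φ(v,w)` for all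
`(v,w) ∈ R^n ⊕ R^n`; i.e. it is the standard involution of the Clifford algebra,
the anti-automorphism extending `(v,w) ↦ (-v,-w)`.  (Stated with `n + 1` for `n`.) -/
theorem invol_is_standard_involution (R : Type) [CommRing R] (n : ℕ) :
    (∀ M N : Matrix (Fin (2 ^ (n + 1))) (Fin (2 ^ (n + 1))) R,
      invol R (n + 1) (M * N) = invol R (n + 1) N * invol R (n + 1) M) ∧
    (∀ M : Matrix (Fin (2 ^ (n + 1))) (Fin (2 ^ (n + 1))) R,
      invol R (n + 1) (invol R (n + 1) M) = M) ∧
    (∀ (c : R) (M : Matrix (Fin (2 ^ (n + 1))) (Fin (2 ^ (n + 1))) R),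
      invol R (n + 1) (c • M) = c • invol R (n + 1) M) ∧
    (∀ M N : Matrix (Fin (2 ^ (n + 1))) (Fin (2 ^ (n + 1))) R,
      invol R (n + 1) (M + N) = invol R (n + 1) M + invol R (n + 1) N) ∧
    (∀ v w : Fin (n + 1) → R, invol R (n + 1) (phiMat R n v w) = -(phiMat R n v w)) :=
  ⟨invol_mul, invol_invol, invol_smul, invol_add, invol_phiMat⟩
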